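/- arXiv:2311.06387 — 2 statements merged into one kernel-verified Lean document; each statement's English description precedes it below -/
import Mathlib

section
/- Let P ⊆ Φ_{B_n} be a signed poset and let f ∈ ℤ^n be a P-partition. Then there is exactly one finite multiset {J_1, …, J_r} of connected ideals of P (repetitions allowed, r ≥ 0) whose members pairwise intersect trivially and which satisfies f = χ_{J_1} + ⋯ + χ_{J_r}. -/
open scoped Classical

noncomputable section

/-- Signed index set `±[n]`: `(true, i)` represents `+i`, `(false, i)` represents `-i`. -/
abbrev SIdx (n : ℕ) := Bool × Fin n

/-- Negation `a ↦ -a` on `±[n]`. -/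
def negS {n : ℕ} (a : SIdx n) : SIdx n := (!a.1, a.2)

/-- Standard basis vector `e_i` of `ℝ^n`. -/
def stdB (n : ℕ) (i : Fin n) : Fin n → ℝ := Pi.single i 1

/-- `rsgn true = 1`, `rsgn false = -1`. -/
def rsgn (s : Bool) : ℝ := if s then 1 else -1

/-- `v(a)` for `a ∈ ±[n]`: `v(+i) = e_i`, `v(-i) = -e_i`. -/
def vS {n : ℕ} (a : SIdx n) : Fin n → ℝ := rsgn a.1 • stdB n a.2

/-- `v` on `±[n] ∪ {0}` (with `none` playing the role of `0`). -/
def vO {n : ℕ} : Option (SIdx n) → (Fin n → ℝ)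
  | none => 0
  | some a => vS a

/-- Negation on `±[n] ∪ {0}`, fixing `0`. -/
def negO {n : ℕ} : Option (SIdx n) → Option (SIdx n)
  | none => none
  | some a => some (negS a)

/-- Standard inner product on `ℝ^n`. -/
def dotR {n : ℕ} (x y : Fin n → ℝ) : ℝ := ∑ i, x i * y i

/-- The type `B_n` root system `Φ_{B_n}`. -/
def BnRoots (n : ℕ) : Set (Fin n → ℝ) :=
  {α | (∃ i j : Fin n, i < j ∧ ∃ s t : Bool, α = rsgn s • stdB n i + rsgn t • stdB n j) ∨
    ∃ i : Fin n, ∃ s : Bool, α = rsgn s • stdB n i}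

/-- The positive roots `Φ⁺_{B_n}`. -/
def BnPos (n : ℕ) : Set (Fin n → ℝ) :=
  {α | (∃ i j : Fin n, i < j ∧ ∃ t : Bool, α = stdB n i + rsgn t • stdB n j) ∨
    ∃ i : Fin n, α = stdB n i}

/-- The type `C_n` root system `Φ_{C_n}`. -/
def CnRoots (n : ℕ) : Set (Fin n → ℝ) :=
  {α | (∃ i j : Fin n, i < j ∧ ∃ s t : Bool, α = rsgn s • stdB n i + rsgn t • stdB n j) ∨
    ∃ i : Fin n, ∃ s : Bool, α = (2 * rsgn s) • stdB n i}

/-- Nonnegative real linear combinations of elements of `S`. -/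
def nnSpan {n : ℕ} (S : Set (Fin n → ℝ)) : Set (Fin n → ℝ) :=
  {x | ∃ (r : ℕ) (c : Fin r → ℝ) (β : Fin r → (Fin n → ℝ)),
    (∀ m, 0 ≤ c m) ∧ (∀ m, β m ∈ S) ∧ x = ∑ m, c m • β m}

/-- A signed poset: a subset of `Φ_{B_n}`, antisymmetric and closed under positive
linear combinations remaining in `Φ_{B_n}`. -/
def IsSignedPoset (n : ℕ) (P : Set (Fin n → ℝ)) : Prop :=
  P ⊆ BnRoots n ∧ (∀ α ∈ P, -α ∉ P) ∧ ∀ α ∈ BnRoots n, α ∈ nnSpan P → α ∈ P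

/-- A `C_n`-signed poset. -/
def IsCnSignedPoset (n : ℕ) (Q : Set (Fin n → ℝ)) : Prop :=
  Q ⊆ CnRoots n ∧ (∀ α ∈ Q, -α ∉ Q) ∧ ∀ α ∈ CnRoots n, α ∈ nnSpan Q → α ∈ Q

/-- The root cone `K^rt_P`. -/
def rootCone {n : ℕ} (P : Set (Fin n → ℝ)) : Set (Fin n → ℝ) := nnSpan P

/-- The weight cone `K^wt_P`. -/
def weightCone {n : ℕ} (P : Set (Fin n → ℝ)) : Set (Fin n → ℝ) :=
  {f | ∀ α ∈ P, 0 ≤ dotR f α}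

/-- The Fischer (strict) order on `±[n] ∪ {0}`:
`a < b` iff `v(a) - v(b) ∈ P`, or (`b = -a ≠ 0` and `v(a) ∈ P`). -/
def fLT {n : ℕ} (P : Set (Fin n → ℝ)) (a b : Option (SIdx n)) : Prop :=
  vO a - vO b ∈ P ∨ (a ≠ none ∧ b = negO a ∧ vO a ∈ P)

/-- A subset of `±[n]` is isotropic if it contains no pair `{i, -i}`. -/
def Isotropic {n : ℕ} (J : Finset (SIdx n)) : Prop :=
  ∀ i : Fin n, ¬((true, i) ∈ J ∧ (false, i) ∈ J)

/-- Signed characteristic vector of a subset of `±[n]`. -/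
def chiF {n : ℕ} (J : Finset (SIdx n)) : Fin n → ℝ := fun i =>
  if (true, i) ∈ J then 1 else if (false, i) ∈ J then -1 else 0

/-- `J` is an ideal of the signed poset `P`. -/
def IsIdeal {n : ℕ} (P : Set (Fin n → ℝ)) (J : Finset (SIdx n)) : Prop :=
  Isotropic J ∧ ∀ α ∈ P, 0 ≤ dotR (chiF J) α

/-- Comparability in the Fischer order of `P`. -/
def fComp {n : ℕ} (P : Set (Fin n → ℝ)) (a b : SIdx n) : Prop :=
  fLT P (some a) (some b) ∨ fLT P (some b) (some a)

/-- One step in the comparability graph on a subset `J` of `±[n]`. -/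
def connStep {n : ℕ} (P : Set (Fin n → ℝ)) (J : Finset (SIdx n)) (a b : SIdx n) : Prop :=
  a ∈ J ∧ b ∈ J ∧ fComp P a b

/-- `J` is connected: nonempty, and any two of its elements are joined by a path inside `J`
in the comparability graph of the Fischer order of `P`. -/
def IsConnectedIdl {n : ℕ} (P : Set (Fin n → ℝ)) (J : Finset (SIdx n)) : Prop :=
  J.Nonempty ∧ ∀ a ∈ J, ∀ b ∈ J, Relation.ReflTransGen (connStep P J) a b

/-- A connected ideal of `P`. -/
def IsConnIdeal {n : ℕ} (P : Set (Fin n → ℝ)) (J : Finset (SIdx n)) : Prop :=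
  IsIdeal P J ∧ IsConnectedIdl P J

/-- Support `supp J = {|a| : a ∈ J}`. -/
def suppF {n : ℕ} (J : Finset (SIdx n)) : Finset (Fin n) := J.image Prod.snd

/-- `J` and `K` intersect nontrivially. -/
def NontrivInter {n : ℕ} (J K : Finset (SIdx n)) : Prop :=
  (suppF J ∩ suppF K).Nonempty ∧ ¬J ⊆ K ∧ ¬K ⊆ J

/-- `J` and `K` intersect trivially. -/
def TrivInter {n : ℕ} (J K : Finset (SIdx n)) : Prop := ¬NontrivInter J K

/-- A signed permutation, as an anti-symmetric bijection of `±[n]`. -/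
def IsSPerm {n : ℕ} (w : SIdx n ≃ SIdx n) : Prop := ∀ a, w (negS a) = negS (w a)

/-- Linear action of a signed permutation on `ℝ^n`, determined by `w(e_i) = v(w(+i))`. -/
def spAct {n : ℕ} (w : SIdx n ≃ SIdx n) (x : Fin n → ℝ) : Fin n → ℝ :=
  ∑ i, x i • vS (w (true, i))

/-- `w` is a linear extension of `P`: a signed permutation with `P ⊆ w(Φ⁺_{B_n})`. -/
def IsLinExt {n : ℕ} (P : Set (Fin n → ℝ)) (w : SIdx n ≃ SIdx n) : Prop :=
  IsSPerm w ∧ ∀ α ∈ P, ∃ β ∈ BnPos n, α = spAct w β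

/-- The (finite) set `𝓛(P)` of linear extensions of `P`. -/
def linExts (n : ℕ) (P : Set (Fin n → ℝ)) : Finset (SIdx n ≃ SIdx n) :=
  Finset.univ.filter (IsLinExt P)

/-- Simple roots of `Φ_{B_n}`: `α_i = e_i - e_{i+1}` for `i < n - 1`, `α_{n-1} = e_{n-1}`
(0-indexed). -/
def simpleRoot (n : ℕ) (i : Fin n) : Fin n → ℝ := fun j =>
  (if j = i then (1 : ℝ) else 0) - if (j : ℕ) = (i : ℕ) + 1 then 1 else 0

/-- `J^w_m = {w(1), …, w(m)}` (0-indexed: the images under `w` of `+1, …, +(m+1)`). -/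
def JwSet {n : ℕ} (w : SIdx n ≃ SIdx n) (m : Fin n) : Finset (SIdx n) :=
  (Finset.univ.filter (fun j : Fin n => j ≤ m)).image (fun j => w (true, j))

/-- An extensible ideal of `P`. -/
def Extensible (n : ℕ) (P : Set (Fin n → ℝ)) (J : Finset (SIdx n)) : Prop :=
  ∃ I : Finset (SIdx n), I.Nonempty ∧ Disjoint I J ∧
    IsIdeal P (J ∪ I) ∧ IsIdeal P (J ∪ I.image negS)

/-- The finite set `J_conn(P)` of connected ideals of `P`. -/
def JconnF (n : ℕ) (P : Set (Fin n → ℝ)) : Finset (Finset (SIdx n)) :=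
  Finset.univ.filter (IsConnIdeal P)

/-- Membership in `Π(P)`: an unordered pair of nontrivially intersecting connected ideals. -/
def inPiP {n : ℕ} (P : Set (Fin n → ℝ)) (p : Sym2 (Finset (SIdx n))) : Prop :=
  ∃ J K : Finset (SIdx n),
    p = s(J, K) ∧ IsConnIdeal P J ∧ IsConnIdeal P K ∧ NontrivInter J K

/-- The finite set `Π(P)` of unordered pairs of nontrivially intersecting connected ideals. -/
def PiP (n : ℕ) (P : Set (Fin n → ℝ)) : Finset (Sym2 (Finset (SIdx n))) :=
  Finset.univ.filter (inPiP P)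

/-- No connected ideal of `P` intersects two or more other connected ideals nontrivially. -/
def NoDoubleNontriv (n : ℕ) (P : Set (Fin n → ℝ)) : Prop :=
  ∀ J K K' : Finset (SIdx n), IsConnIdeal P J → IsConnIdeal P K → IsConnIdeal P K' →
    NontrivInter J K → NontrivInter J K' → K = K'

/-- The connected component of `a` inside `J` (w.r.t. the Fischer comparability graph). -/
def componentIn {n : ℕ} (P : Set (Fin n → ℝ)) (J : Finset (SIdx n)) (a : SIdx n) :
    Finset (SIdx n) :=
  J.filter (fun b => Relation.ReflTransGen (connStep P J) a b)

/-- The set of connected components of `J`. -/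
def componentsOf {n : ℕ} (P : Set (Fin n → ℝ)) (J : Finset (SIdx n)) :
    Finset (Finset (SIdx n)) :=
  J.image (componentIn P J)

/-- The signed support `supp±(f) = {sgn(f_i)·i : f_i ≠ 0}` of a vector `f ∈ ℝ^n`. -/
def suppPM {n : ℕ} (f : Fin n → ℝ) : Finset (SIdx n) :=
  Finset.univ.filter (fun a : SIdx n => if a.1 then 0 < f a.2 else f a.2 < 0)

/-- Index type for the variables `U_J`, `J` a connected ideal of `P`. -/
abbrev ConnIdx (n : ℕ) (P : Set (Fin n → ℝ)) := {J : Finset (SIdx n) // IsConnIdeal P J}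

/-- Integer signed characteristic vector, as an exponent vector for Laurent monomials. -/
def chiZ {n : ℕ} (J : Finset (SIdx n)) : Fin n →₀ ℤ :=
  Finsupp.equivFunOnFinite.symm (fun i =>
    if (true, i) ∈ J then 1 else if (false, i) ∈ J then -1 else 0)

/-- The map `φ : k[U_J : J ∈ J_conn(P)] → k[x_1^{±1}, …, x_n^{±1}]`, `U_J ↦ x^{χ_J}`. -/
def phiWt (n : ℕ) (P : Set (Fin n → ℝ)) (k : Type) [Field k] :
    MvPolynomial (ConnIdx n P) k →ₐ[k] AddMonoidAlgebra k (Fin n →₀ ℤ) :=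
  MvPolynomial.aeval (fun J => AddMonoidAlgebra.single (chiZ J.val) 1)

/-- The binomial `syz(U_J, U_K) = U_J U_K - (∏_A U_A) (∏_B U_B)`, where `A` runs over the
connected components of `J ∩ K` and `B` over the connected components of `supp±(χ_J + χ_K)`. -/
def syzPoly (n : ℕ) (P : Set (Fin n → ℝ)) (k : Type) [Field k] (J K : ConnIdx n P) :
    MvPolynomial (ConnIdx n P) k :=
  MvPolynomial.X J * MvPolynomial.X K -
    (∏ A ∈ Finset.univ.filter
        (fun A : ConnIdx n P => (A : Finset (SIdx n)) ∈ componentsOf P (J.val ∩ K.val)),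
        MvPolynomial.X A) *
      ∏ B ∈ Finset.univ.filter
        (fun B : ConnIdx n P =>
          (B : Finset (SIdx n)) ∈ componentsOf P (suppPM (chiF J.val + chiF K.val))),
        MvPolynomial.X B

/-- `θ_1, …, θ_r` is a regular sequence: the ideal it generates is proper, and each `θ_{m+1}`
is a non-zero-divisor modulo the ideal generated by `θ_1, …, θ_m`. -/
def IsRegSeq {R : Type} [CommRing R] {r : ℕ} (θ : Fin r → R) : Prop :=
  Ideal.span (Set.range θ) ≠ ⊤ ∧
    ∀ (m : ℕ) (hm : m < r) (x : R),
      θ ⟨m, hm⟩ * x ∈ Ideal.span (θ '' {j : Fin r | (j : ℕ) < m}) →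
        x ∈ Ideal.span (θ '' {j : Fin r | (j : ℕ) < m})

/-- The induced signed poset `P_A = P ∩ span_ℝ{e_i : i ∈ A}`. -/
def inducedPoset (n : ℕ) (P : Set (Fin n → ℝ)) (A : Finset (Fin n)) : Set (Fin n → ℝ) :=
  {α | α ∈ P ∧ α ∈ Submodule.span ℝ (stdB n '' (A : Set (Fin n)))}

/-- The major index of a signed permutation. -/
def majB {n : ℕ} (w : SIdx n ≃ SIdx n) : ℕ :=
  ∑ i ∈ Finset.univ.filter
      (fun i : Fin n => spAct w (simpleRoot n i) ∉ BnPos n), ((i : ℕ) + 1)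

/-- `[m]_q = 1 + q + ⋯ + q^{m-1}` in `ℤ[q]`. -/
def qInt (m : ℕ) : Polynomial ℤ := ∑ t ∈ Finset.range m, Polynomial.X ^ t

/-- The symmetric function `{J, K} ↦ ⟨x, χ_J + χ_K⟩` on unordered pairs. -/
def pairDot {n : ℕ} (x : Fin n → ℝ) : Sym2 (Finset (SIdx n)) → ℝ :=
  Sym2.lift ⟨fun J K => dotR x (chiF J + chiF K),
    fun J K => congrArg (dotR x) (add_comm (chiF J) (chiF K))⟩

/-- The symmetric function `{J, K} ↦ [|J| + |K|]_q` on unordered pairs. -/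
def pairQ {n : ℕ} : Sym2 (Finset (SIdx n)) → Polynomial ℤ :=
  Sym2.lift ⟨fun J K => qInt (J.card + K.card),
    fun J K => congrArg qInt (Nat.add_comm J.card K.card)⟩

/-- The principal order ideal `I_≤(a)` in the Fischer order restricted to `±[n]`. -/
def Ile {n : ℕ} (P : Set (Fin n → ℝ)) (a : SIdx n) : Set (SIdx n) :=
  {b | b = a ∨ fLT P (some b) (some a)}

/-- A set of signed indices is isotropic if it contains no pair `{i, -i}`. -/
def IsoSet {n : ℕ} (S : Set (SIdx n)) : Prop :=
  ∀ i : Fin n, ¬((true, i) ∈ S ∧ (false, i) ∈ S)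

/-- A covering pair of the Fischer order of `P`. -/
def CovPair {n : ℕ} (P : Set (Fin n → ℝ)) (a b : Option (SIdx n)) : Prop :=
  fLT P a b ∧ ¬∃ c : Option (SIdx n), fLT P a c ∧ fLT P c b

/-- The set of covering roots of `P`. -/
def covRoots {n : ℕ} (P : Set (Fin n → ℝ)) : Set (Fin n → ℝ) :=
  {x | ∃ a b : Option (SIdx n), CovPair P a b ∧ x = vO a - vO b}

/-- The set `J_ε = {i : ε_i = 1} ∪ {-i : ε_i = -1}` attached to a `{-1,0,1}`-vector. -/
def Jeps {n : ℕ} (ε : Fin n → ℝ) : Set (SIdx n) :=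
  {a | (a.1 = true ∧ ε a.2 = 1) ∨ (a.1 = false ∧ ε a.2 = -1)}

/-! ### Integer-valued helpers -/

/-- signed value of an integer vector -/
def svZ {n : ℕ} (f : Fin n → ℤ) (a : SIdx n) : ℤ := if a.1 then f a.2 else - f a.2

/-- integer signed characteristic vector -/
def chiI {n : ℕ} (J : Finset (SIdx n)) : Fin n → ℤ := fun i =>
  if (true, i) ∈ J then 1 else if (false, i) ∈ J then -1 else 0

/-- positive signed support -/
def posS {n : ℕ} (f : Fin n → ℤ) : Finset (SIdx n) :=
  Finset.univ.filter (fun a => 0 < svZ f a)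

/-- integer `P`-partition, in terms of signed values -/
def PPart {n : ℕ} (P : Set (Fin n → ℝ)) (f : Fin n → ℤ) : Prop :=
  (∀ a, vS a ∈ P → 0 ≤ svZ f a) ∧ ∀ a b, vS a - vS b ∈ P → svZ f b ≤ svZ f a

lemma mem_posS {n : ℕ} (f : Fin n → ℤ) (a : SIdx n) : a ∈ posS f ↔ 0 < svZ f a := by
  simp [posS]

lemma svZ_negS {n : ℕ} (f : Fin n → ℤ) (a : SIdx n) : svZ f (negS a) = - svZ f a := by
  rcases a with ⟨s, i⟩
  cases s <;> simp [svZ, negS]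

lemma svZ_sub {n : ℕ} (f g : Fin n → ℤ) (a : SIdx n) : svZ (f - g) a = svZ f a - svZ g a := by
  rcases a with ⟨s, i⟩
  cases s <;> simp [svZ]
  ring

lemma negS_negS {n : ℕ} (a : SIdx n) : negS (negS a) = a := by
  rcases a with ⟨s, i⟩
  cases s <;> simp [negS]

lemma svZ_sum {n : ℕ} (M : Multiset (Finset (SIdx n))) (a : SIdx n) :
    svZ (M.map chiI).sum a = (M.map (fun J => svZ (chiI J) a)).sum := by
  induction M using Multiset.induction with
  | empty => simp [svZ]
  | cons J M ih =>
    simp only [Multiset.map_cons, Multiset.sum_cons, ← ih]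
    rcases a with ⟨s, i⟩
    cases s <;> simp [svZ]
    ring

lemma dot_vS {n : ℕ} (f : Fin n → ℤ) (a : SIdx n) :
    dotR (fun i => (f i : ℝ)) (vS a) = (svZ f a : ℝ) := by
  rcases a with ⟨s, i⟩
  cases s <;> simp [dotR, vS, svZ, rsgn, stdB, Pi.single_apply]

lemma dot_vS_sub {n : ℕ} (f : Fin n → ℤ) (a b : SIdx n) :
    dotR (fun i => (f i : ℝ)) (vS a - vS b) = (svZ f a : ℝ) - svZ f b := by
  rw [← dot_vS, ← dot_vS]
  simp [dotR, mul_sub, Finset.sum_sub_distrib]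

lemma root_cases {n : ℕ} {α : Fin n → ℝ} (h : α ∈ BnRoots n) :
    (∃ a, α = vS a) ∨ ∃ a b, α = vS a - vS b := by
  rcases h with ⟨i, j, _, s, t, rfl⟩ | ⟨i, s, rfl⟩
  · right
    refine ⟨(s, i), (!t, j), ?_⟩
    cases t <;> simp [vS, rsgn, sub_eq_add_neg]
  · exact Or.inl ⟨(s, i), rfl⟩

lemma ppart_iff {n : ℕ} {P : Set (Fin n → ℝ)} (hP : P ⊆ BnRoots n) (f : Fin n → ℤ) :
    PPart P f ↔ ∀ α ∈ P, 0 ≤ dotR (fun i => (f i : ℝ)) α := by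
  constructor
  · rintro ⟨h1, h2⟩ α hα
    rcases root_cases (hP hα) with ⟨a, rfl⟩ | ⟨a, b, rfl⟩
    · rw [dot_vS]; exact_mod_cast h1 a hα
    · rw [dot_vS_sub]
      have : (svZ f b : ℝ) ≤ svZ f a := by exact_mod_cast h2 a b hα
      linarith
  · intro h
    refine ⟨fun a ha => ?_, fun a b hab => ?_⟩
    · have := h _ ha
      rw [dot_vS] at this
      exact_mod_cast this
    · have := h _ hab
      rw [dot_vS_sub, sub_nonneg] at this
      exact_mod_cast this

lemma chiF_eq {n : ℕ} (J : Finset (SIdx n)) : chiF J = fun i => ((chiI J i : ℤ) : ℝ) := by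
  funext i
  simp only [chiF, chiI]
  split_ifs <;> simp

lemma chiF_sum {n : ℕ} (M : Multiset (Finset (SIdx n))) :
    (M.map chiF).sum = fun i => (((M.map chiI).sum i : ℤ) : ℝ) := by
  induction M using Multiset.induction with
  | empty => funext i; simp
  | cons J M ih =>
    funext i
    rw [Multiset.map_cons, Multiset.sum_cons, ih, chiF_eq J]
    simp

lemma iso_neg {n : ℕ} {J : Finset (SIdx n)} (h : Isotropic J) {a : SIdx n} (ha : a ∈ J) :
    negS a ∉ J := by
  intro h'
  rcases a with ⟨s, i⟩
  cases s
  · exact h i ⟨h', ha⟩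
  · exact h i ⟨ha, h'⟩

lemma iso_posS {n : ℕ} (f : Fin n → ℤ) : Isotropic (posS f) := by
  intro i h
  simp only [mem_posS, svZ] at h
  simp at h
  omega

lemma sv_chi {n : ℕ} {J : Finset (SIdx n)} (h : Isotropic J) (a : SIdx n) :
    svZ (chiI J) a = if a ∈ J then 1 else if negS a ∈ J then -1 else 0 := by
  rcases a with ⟨s, i⟩
  have := h i
  cases s <;> simp only [svZ, chiI, negS] <;> simp <;> split_ifs <;> simp_all

lemma ideal_iff {n : ℕ} {P : Set (Fin n → ℝ)} (hP : P ⊆ BnRoots n) (J : Finset (SIdx n)) :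
    IsIdeal P J ↔ Isotropic J ∧ PPart P (chiI J) := by
  rw [ppart_iff hP, IsIdeal, chiF_eq]

lemma fComp_cases {n : ℕ} {P : Set (Fin n → ℝ)} {J : Finset (SIdx n)} (h : Isotropic J)
    {a b : SIdx n} (hs : connStep P J a b) : vS a - vS b ∈ P ∨ vS b - vS a ∈ P := by
  obtain ⟨ha, hb, hc⟩ := hs
  rcases hc with (hc | ⟨_, hc, _⟩) | (hc | ⟨_, hc, _⟩)
  · exact Or.inl hc
  · simp only [negO, Option.some.injEq] at hc
    exact absurd hb (hc ▸ iso_neg h ha)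
  · exact Or.inr hc
  · simp only [negO, Option.some.injEq] at hc
    exact absurd ha (hc ▸ iso_neg h hb)

lemma step_of {n : ℕ} {P : Set (Fin n → ℝ)} {J : Finset (SIdx n)} {a b : SIdx n}
    (ha : a ∈ J) (hb : b ∈ J) (h : vS a - vS b ∈ P ∨ vS b - vS a ∈ P) : connStep P J a b :=
  ⟨ha, hb, h.imp Or.inl Or.inl⟩

lemma step_symm {n : ℕ} {P : Set (Fin n → ℝ)} {J : Finset (SIdx n)} {a b : SIdx n}
    (h : connStep P J a b) : connStep P J b a := ⟨h.2.1, h.1, h.2.2.symm⟩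

lemma rtg_symm {n : ℕ} {P : Set (Fin n → ℝ)} {J : Finset (SIdx n)} {a b : SIdx n}
    (h : Relation.ReflTransGen (connStep P J) a b) :
    Relation.ReflTransGen (connStep P J) b a := by
  induction h with
  | refl => exact .refl
  | tail _ h ih => exact Relation.ReflTransGen.head (step_symm h) ih

lemma conn_sub {n : ℕ} {P : Set (Fin n → ℝ)} {K S : Finset (SIdx n)} (hK : IsConnectedIdl P K)
    (hS : K ⊆ S) {a : SIdx n} (ha : a ∈ K) :
    K ⊆ componentIn P S a := by
  intro b hb
  simp only [componentIn, Finset.mem_filter]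
  exact ⟨hS hb, Relation.ReflTransGen.mono (fun x y h => ⟨hS h.1, hS h.2.1, h.2.2⟩) _ _ (hK.2 a ha b hb)⟩

lemma comp_sub {n : ℕ} {P : Set (Fin n → ℝ)} {S : Finset (SIdx n)} {a : SIdx n} :
    componentIn P S a ⊆ S := Finset.filter_subset _ _

lemma comp_closed {n : ℕ} {P : Set (Fin n → ℝ)} {S : Finset (SIdx n)} {a b c : SIdx n}
    (hb : b ∈ componentIn P S a) (hc : c ∈ S) (h : vS b - vS c ∈ P ∨ vS c - vS b ∈ P) :
    c ∈ componentIn P S a := by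
  simp only [componentIn, Finset.mem_filter] at hb ⊢
  exact ⟨hc, hb.2.tail (step_of hb.1 hc h)⟩

lemma comp_conn {n : ℕ} {P : Set (Fin n → ℝ)} {S : Finset (SIdx n)} {a : SIdx n} (ha : a ∈ S) :
    IsConnectedIdl P (componentIn P S a) := by
  have key : ∀ b, Relation.ReflTransGen (connStep P S) a b →
      Relation.ReflTransGen (connStep P (componentIn P S a)) a b := by
    intro b hb
    induction hb with
    | refl => exact .refl
    | tail h1 h2 ih =>
      refine ih.tail ⟨?_, ?_, h2.2.2⟩
      · simp only [componentIn, Finset.mem_filter]; exact ⟨h2.1, h1⟩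
      · simp only [componentIn, Finset.mem_filter]; exact ⟨h2.2.1, h1.tail h2⟩
  refine ⟨⟨a, by simp only [componentIn, Finset.mem_filter]; exact ⟨ha, .refl⟩⟩, ?_⟩
  intro b hb c hc
  simp only [componentIn, Finset.mem_filter] at hb hc
  exact (rtg_symm (key b hb.2)).trans (key c hc.2)

/-! ### Good multisets -/

/-- connected ideals which pairwise intersect trivially -/
def GoodM {n : ℕ} (P : Set (Fin n → ℝ)) (M : Multiset (Finset (SIdx n))) : Prop :=
  (∀ J ∈ M, IsConnIdeal P J) ∧ ∀ J ∈ M, ∀ K ∈ M, TrivInter J K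

lemma triv_refl {n : ℕ} (J : Finset (SIdx n)) : TrivInter J J := fun h => h.2.1 subset_rfl

lemma triv_symm {n : ℕ} {J K : Finset (SIdx n)} (h : TrivInter J K) : TrivInter K J := by
  intro h'
  exact h ⟨by rw [Finset.inter_comm]; exact h'.1, h'.2.2, h'.2.1⟩

lemma pw_iff {n : ℕ} (M : Multiset (Finset (SIdx n))) :
    M.Pairwise TrivInter ↔ ∀ J ∈ M, ∀ K ∈ M, TrivInter J K := by
  induction M using Quotient.inductionOn with
  | h l =>
  have hs : Std.Symm (TrivInter (n := n)) := ⟨fun _ _ h => triv_symm h⟩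
  have := Multiset.pairwise_coe_iff_pairwise (l := l) (r := TrivInter (n := n))
  simp only [Multiset.quot_mk_to_coe, this, Multiset.mem_coe]
  constructor
  · intro h J hJ K hK
    by_cases e : J = K
    · subst e; exact triv_refl J
    · exact h.forall hJ hK e
  · intro h
    exact List.pairwise_of_forall_mem_list fun J hJ K hK => h J hJ K hK

lemma triv_cases {n : ℕ} {J K : Finset (SIdx n)} (h : TrivInter J K) {a b : SIdx n}
    (ha : a ∈ J) (hb : b ∈ K) (hab : a.2 = b.2) : J ⊆ K ∨ K ⊆ J := by
  by_contra hc
  push Not at hc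
  refine h ⟨⟨a.2, ?_⟩, hc.1, hc.2⟩
  simp only [suppF, Finset.mem_inter, Finset.mem_image]
  exact ⟨⟨a, ha, rfl⟩, ⟨b, hb, hab.symm⟩⟩

lemma good_pos {n : ℕ} {P : Set (Fin n → ℝ)} {M : Multiset (Finset (SIdx n))} (hM : GoodM P M)
    {J : Finset (SIdx n)} (hJ : J ∈ M) : J ⊆ posS (M.map chiI).sum := by
  intro a ha
  rw [mem_posS, svZ_sum]
  have hn : ∀ K ∈ M, 0 ≤ svZ (chiI K) a := by
    intro K hK
    have hKi := (hM.1 K hK).1.1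
    have : negS a ∉ K := by
      intro hna
      rcases triv_cases (hM.2 J hJ K hK) ha hna rfl with h | h
      · exact iso_neg hKi (h ha) hna
      · exact iso_neg (hM.1 J hJ).1.1 ha (h hna)
    rw [sv_chi hKi, if_neg this]
    split_ifs <;> simp
  have h1 : svZ (chiI J) a = 1 := by rw [sv_chi (hM.1 J hJ).1.1, if_pos ha]
  obtain ⟨N, rfl⟩ := Multiset.exists_cons_of_mem hJ
  rw [Multiset.map_cons, Multiset.sum_cons, h1]
  have : 0 ≤ (N.map (fun J => svZ (chiI J) a)).sum := by
    apply Multiset.sum_nonneg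
    intro x hx
    obtain ⟨K, hK, rfl⟩ := Multiset.mem_map.1 hx
    exact hn K (Multiset.mem_cons_of_mem hK)
  omega

lemma good_mem {n : ℕ} {P : Set (Fin n → ℝ)} {M : Multiset (Finset (SIdx n))} (hM : GoodM P M)
    {a : SIdx n} (ha : a ∈ posS (M.map chiI).sum) : ∃ J ∈ M, a ∈ J := by
  by_contra hc
  push Not at hc
  rw [mem_posS, svZ_sum] at ha
  have : (M.map (fun J => svZ (chiI J) a)).sum ≤ 0 := by
    rw [← neg_nonneg, ← Multiset.sum_map_neg]
    apply Multiset.sum_nonneg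
    intro x hx
    obtain ⟨K, hK, rfl⟩ := Multiset.mem_map.1 hx
    rw [sv_chi (hM.1 K hK).1.1, if_neg (hc K hK)]
    split_ifs <;> simp
  omega

lemma good_comp {n : ℕ} {P : Set (Fin n → ℝ)} (hP : P ⊆ BnRoots n)
    {M : Multiset (Finset (SIdx n))} (hM : GoodM P M)
    {a : SIdx n} (ha : a ∈ posS (M.map chiI).sum) :
    componentIn P (posS (M.map chiI).sum) a ∈ M := by
  obtain ⟨J₀, hJ₀, haJ₀⟩ := good_mem hM ha
  obtain ⟨J, hJ, hmax⟩ := Finset.exists_max_image (M.toFinset.filter (a ∈ ·)) Finset.card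
    ⟨J₀, by simp [hJ₀, haJ₀]⟩
  simp only [Finset.mem_filter, Multiset.mem_toFinset] at hJ hmax
  obtain ⟨hJ, haJ⟩ := hJ
  suffices h : componentIn P (posS (M.map chiI).sum) a = J by rw [h]; exact hJ
  have ideal_down : ∀ K ∈ M, ∀ b c, c ∈ K → vS b - vS c ∈ P → b ∈ K := by
    intro K hK b c hc hbc
    have hi := (ideal_iff hP K).1 (hM.1 K hK).1
    have := hi.2.2 b c hbc
    rw [sv_chi hi.1, sv_chi hi.1, if_pos hc] at this
    by_contra hb
    rw [if_neg hb] at this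
    split_ifs at this <;> omega
  apply Finset.Subset.antisymm
  · intro b hb
    simp only [componentIn, Finset.mem_filter] at hb
    replace hb := hb.2
    induction hb with
    | refl => exact haJ
    | @tail b c _ hs ih =>
      obtain ⟨K, hK, hcK⟩ := good_mem hM hs.2.1
      rcases fComp_cases (iso_posS _) hs with h | h
      · have hbK := ideal_down K hK b c hcK h
        rcases triv_cases (hM.2 J hJ K hK) ih hbK rfl with h | h
        · have := Finset.eq_of_subset_of_card_le h (hmax K ⟨hK, h haJ⟩)
          rw [this]; exact hcK
        · exact h hcK
      · exact ideal_down J hJ c b ih h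
  · exact conn_sub (hM.1 J hJ).2 (good_pos hM hJ) haJ

lemma good_empty {n : ℕ} {P : Set (Fin n → ℝ)} {M : Multiset (Finset (SIdx n))} (hM : GoodM P M)
    (h : (M.map chiI).sum = 0) : M = 0 := by
  by_contra hc
  obtain ⟨J, hJ⟩ := Multiset.exists_mem_of_ne_zero hc
  obtain ⟨a, ha⟩ := (hM.1 J hJ).2.1
  have := good_pos hM hJ ha
  rw [h, mem_posS] at this
  simp [svZ] at this

lemma good_unique {n : ℕ} {P : Set (Fin n → ℝ)} (hP : P ⊆ BnRoots n)
    (M : Multiset (Finset (SIdx n))) : ∀ N : Multiset (Finset (SIdx n)), GoodM P M → GoodM P N →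
    (M.map chiI).sum = (N.map chiI).sum → M = N := by
  induction M using Multiset.strongInductionOn with
  | ih M ih =>
  intro N hM hN he
  by_cases h0 : M = 0
  · subst h0
    exact (good_empty hN (by rw [← he]; simp)).symm
  obtain ⟨J₀, hJ₀⟩ := Multiset.exists_mem_of_ne_zero h0
  obtain ⟨a, ha⟩ := (hM.1 J₀ hJ₀).2.1
  have haS := good_pos hM hJ₀ ha
  have h1 := good_comp hP hM haS
  have h2 := good_comp hP hN (he ▸ haS)
  rw [← he] at h2
  generalize componentIn P (posS (M.map chiI).sum) a = J at h1 h2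
  obtain ⟨M', rfl⟩ := Multiset.exists_cons_of_mem h1
  obtain ⟨N', rfl⟩ := Multiset.exists_cons_of_mem h2
  have sub : ∀ L, GoodM P (J ::ₘ L) → GoodM P L := fun L h =>
    ⟨fun K hK => h.1 K (Multiset.mem_cons_of_mem hK),
      fun K hK K' hK' => h.2 K (Multiset.mem_cons_of_mem hK) K' (Multiset.mem_cons_of_mem hK')⟩
  rw [ih M' (Multiset.lt_cons_self _ _) N' (sub _ hM) (sub _ hN) (by simpa using he)]

lemma good_exists {n : ℕ} {P : Set (Fin n → ℝ)} (hP : P ⊆ BnRoots n) (k : ℕ) :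
    ∀ f : Fin n → ℤ, PPart P f → (∑ i, (f i).natAbs) = k →
    ∃ M, GoodM P M ∧ f = (M.map chiI).sum := by
  induction k using Nat.strong_induction_on with
  | h k ih =>
  intro f hf hk
  by_cases h0 : f = 0
  · exact ⟨0, ⟨by simp, by simp⟩, by simp [h0]⟩
  have : ∃ a, a ∈ posS f := by
    obtain ⟨i, hi⟩ := Function.ne_iff.1 h0
    simp only [Pi.zero_apply] at hi
    rcases lt_or_gt_of_ne hi with h | h
    · exact ⟨(false, i), by rw [mem_posS]; simp [svZ, h]⟩
    · exact ⟨(true, i), by rw [mem_posS]; simp [svZ, h]⟩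
  obtain ⟨a, ha⟩ := this
  obtain ⟨J, hJ⟩ : ∃ J, J = componentIn P (posS f) a := ⟨_, rfl⟩
  have hJS : J ⊆ posS f := hJ ▸ comp_sub
  have hJS' : ∀ b ∈ J, 0 < svZ f b := fun b hb => (mem_posS f b).1 (hJS hb)
  have hJn : ∀ b, negS b ∈ J → svZ f b < 0 := by
    intro b hb
    have := hJS' _ hb
    rw [svZ_negS] at this
    omega
  have hiso : Isotropic J := fun i h => iso_posS f i ⟨hJS h.1, hJS h.2⟩
  have hcl : ∀ b ∈ J, ∀ c, 0 < svZ f c → (vS b - vS c ∈ P ∨ vS c - vS b ∈ P) → c ∈ J := by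
    intro b hb c hc h
    rw [hJ] at hb ⊢
    exact comp_closed hb ((mem_posS f c).2 hc) h
  have hneg : ∀ b : SIdx n, vS (negS b) = - vS b := by
    rintro ⟨s, i⟩
    cases s <;> simp [vS, negS, rsgn]
  have hcln : ∀ b, negS b ∈ J → ∀ c, svZ f c < 0 → (vS b - vS c ∈ P ∨ vS c - vS b ∈ P) →
      negS c ∈ J := by
    intro b hb c hc h
    refine hcl _ hb _ (by rw [svZ_negS]; omega) ?_
    rw [hneg, hneg]
    have e1 : -vS b - -vS c = vS c - vS b := by abel
    have e2 : -vS c - -vS b = vS b - vS c := by abel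
    rw [e1, e2]
    exact h.symm
  have hch := sv_chi hiso
  have hJc : IsConnIdeal P J := by
    refine ⟨(ideal_iff hP J).2 ⟨hiso, ?_, ?_⟩, hJ ▸ comp_conn ha⟩
    · intro b hb
      have h1 := hf.1 b hb
      have h2 := hJn b
      rw [hch]
      split_ifs with h3 h4
      · simp
      · exact absurd (h2 h4) (by omega)
      · simp
    · intro b c hbc
      have h1 := hf.2 b c hbc
      have h2 := hJn b
      have h3 := hJS' c
      have h4 := hcl c
      have h5 := hcln b
      grind
  have hg : PPart P (f - chiI J) := by
    refine ⟨?_, ?_⟩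
    · intro b hb
      have h1 := hf.1 b hb
      have h2 := hJS' b
      rw [svZ_sub, hch]
      grind
    · intro b c hbc
      have h1 := hf.2 b c hbc
      have h2 := hJS' b
      have h3 := hJn c
      have h4 := hcl b
      have h5 := hcln c
      rw [svZ_sub, svZ_sub, hch, hch]
      grind
  have hpt : ∀ b, svZ (f - chiI J) b ≤ 0 ∨ 0 < svZ f b := by
    intro b
    have h2 := hJS' b
    have h3 := hJn b
    rw [svZ_sub, hch]
    grind
  have hlt : (∑ i, ((f - chiI J) i).natAbs) < k := by
    rw [← hk]
    have hle : ∀ i, ((f - chiI J) i).natAbs ≤ (f i).natAbs ∧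
        (i = a.2 → ((f - chiI J) i).natAbs < (f i).natAbs) := by
      intro i
      have haJ : a ∈ J := by
        rw [hJ]
        simp only [componentIn, Finset.mem_filter]
        exact ⟨ha, .refl⟩
      have t1 := hJS' (true, i)
      have t2 := hJS' (false, i)
      have t3 : i = a.2 → (true, i) ∈ J ∨ (false, i) ∈ J := by
        rintro rfl
        rcases a with ⟨s, i⟩
        cases s
        · exact Or.inr haJ
        · exact Or.inl haJ
      simp only [svZ, if_true, Bool.false_eq_true, if_false] at t1 t2
      simp only [Pi.sub_apply, chiI]
      split_ifs with u1 u2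
      · have := t1 u1
        omega
      · have := t2 u2
        omega
      · refine ⟨by simp, fun e => ?_⟩
        rcases t3 e with h | h
        · exact absurd h u1
        · exact absurd h u2
    exact Finset.sum_lt_sum (fun i _ => (hle i).1) ⟨a.2, Finset.mem_univ _, (hle a.2).2 rfl⟩
  obtain ⟨M, hM, hMs⟩ := ih _ hlt _ hg rfl
  have hKJ : ∀ K ∈ M, TrivInter J K := by
    intro K hK hnt
    have hKS : K ⊆ posS f := by
      intro b hb
      have := good_pos hM hK hb
      rw [← hMs, mem_posS] at this
      rw [mem_posS]
      rcases hpt b with h | h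
      · omega
      · exact h
    obtain ⟨⟨i, hi⟩, _, h2⟩ := hnt
    simp only [suppF, Finset.mem_inter, Finset.mem_image] at hi
    obtain ⟨⟨b, hb, hbi⟩, ⟨c, hc, hci⟩⟩ := hi
    have hbc : b = c := by
      have h3 := iso_neg (iso_posS f) (hJS hb)
      have h4 := hKS hc
      rcases b with ⟨s, i⟩
      rcases c with ⟨t, j⟩
      have hij : i = j := hbi.trans hci.symm
      subst hij
      cases s <;> cases t <;> first | rfl | exact absurd h4 h3
    subst hbc
    apply h2
    intro d hd
    have h5 := (hM.1 K hK).2.2 b hc d hd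
    clear hd
    induction h5 with
    | refl => exact hb
    | @tail x y _ hs ihx =>
      exact hcl x ihx y ((mem_posS f y).1 (hKS hs.2.1)) (fComp_cases (hM.1 K hK).1.1 hs)
  refine ⟨J ::ₘ M, ⟨?_, ?_⟩, ?_⟩
  · intro K hK
    rcases Multiset.mem_cons.1 hK with rfl | hK
    · exact hJc
    · exact hM.1 K hK
  · intro K hK L hL
    rcases Multiset.mem_cons.1 hK with h1 | h1 <;> rcases Multiset.mem_cons.1 hL with h2 | h2
    · rw [h1, h2]; exact triv_refl _
    · rw [h1]; exact hKJ L h2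
    · rw [h2]; exact triv_symm (hKJ K h1)
    · exact hM.2 K h1 L h2
  · rw [Multiset.map_cons, Multiset.sum_cons, ← hMs]
    abel

theorem statement_15 (n : ℕ) (hn : 1 ≤ n) (P : Set (Fin n → ℝ)) (hP : IsSignedPoset n P)
    (f : Fin n → ℤ) (hf : ∀ α ∈ P, 0 ≤ dotR (fun i => (f i : ℝ)) α) :
    ∃! M : Multiset (Finset (SIdx n)),
      (∀ J ∈ M, IsConnIdeal P J) ∧ M.Pairwise TrivInter ∧
      (fun i => (f i : ℝ)) = (M.map chiF).sum := by
  obtain ⟨M, hM, hs⟩ := good_exists hP.1 _ f ((ppart_iff hP.1 f).2 hf) rfl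
  refine ⟨M, ⟨hM.1, (pw_iff M).2 hM.2, ?_⟩, ?_⟩
  · rw [chiF_sum, ← hs]
  · rintro N ⟨hN1, hN2, hN3⟩
    refine good_unique hP.1 N M ⟨hN1, (pw_iff N).1 hN2⟩ hM ?_
    rw [← hs]
    rw [chiF_sum] at hN3
    funext i
    have := congrFun hN3 i
    exact_mod_cast this.symm
end
end

section
/- Let P ⊆ Φ_{B_n} be a signed poset, k a field, and S = k[U_J : J ∈ J_conn(P)] a polynomial ring with one variable per connected ideal of P. Then the monomials U_J U_K, as {J, K} ranges over Π(P), listed in some (equivalently, any) order, form a regular sequence in S if and only if no connected ideal of P intersects two or more other connected ideals of P nontrivially (equivalently, the pairs in Π(P) are pairwise disjoint); in this case the quotient S/(U_J U_K : {J,K} ∈ Π(P)) is a complete intersection. -/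
open scoped Classical

noncomputable section

/-- Multiplication by a variable is injective modulo a monomial ideal not involving it. -/
theorem mem_span_of_X_mul {σ k : Type} [Field k] (S : Set (σ →₀ ℕ)) (J : σ)
    (hS : ∀ s ∈ S, s J = 0) (x : MvPolynomial σ k)
    (h : MvPolynomial.X J * x ∈
      Ideal.span ((fun s => MvPolynomial.monomial s (1 : k)) '' S)) :
    x ∈ Ideal.span ((fun s => MvPolynomial.monomial s (1 : k)) '' S) := by
  rw [MvPolynomial.mem_ideal_span_monomial_image] at h ⊢
  intro xi hxi
  obtain ⟨s, hs, hle⟩ := h (Finsupp.single J 1 + xi) (by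
    rw [MvPolynomial.mem_support_iff, MvPolynomial.coeff_X_mul]
    exact MvPolynomial.mem_support_iff.mp hxi)
  refine ⟨s, hs, fun i => ?_⟩
  have h1 := hle i
  by_cases hi : J = i
  · subst hi; rw [hS s hs]; exact Nat.zero_le _
  · simpa [Finsupp.single_apply, hi] using h1

theorem X_mul_X_eq {σ k : Type} [Field k] (J K : σ) :
    (MvPolynomial.X J * MvPolynomial.X K : MvPolynomial σ k) =
      MvPolynomial.monomial (Finsupp.single J 1 + Finsupp.single K 1) 1 := by
  simp [MvPolynomial.X, MvPolynomial.monomial_mul]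

/-- A variable is not in an ideal generated by products of two variables. -/
theorem X_notMem_span {σ k : Type} [Field k] (T : Set (MvPolynomial σ k))
    (hT : ∀ f ∈ T, ∃ J K : σ, f = MvPolynomial.X J * MvPolynomial.X K) (L : σ) :
    MvPolynomial.X L ∉ Ideal.span T := by
  intro h
  let F : MvPolynomial σ k →ₐ[k] DualNumber k := MvPolynomial.aeval (fun _ => DualNumber.eps)
  have hle : Ideal.span T ≤ RingHom.ker F := by
    rw [Ideal.span_le]
    intro f hf
    obtain ⟨J, K, rfl⟩ := hT f hf
    simp [F, RingHom.mem_ker]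
  have h2 := hle h
  rw [RingHom.mem_ker] at h2
  have h3 : (DualNumber.eps : DualNumber k) = 0 := by simpa [F] using h2
  have h4 := congrArg TrivSqZeroExt.snd h3
  simp at h4

theorem regSeq_iff {σ k : Type} [Field k] (R : σ → σ → Prop) (hsymm : ∀ a b, R a b → R b a)
    (r : ℕ) (g : Fin r → MvPolynomial σ k)
    (hinj : Function.Injective g)
    (hg : Set.range g = {f | ∃ J K : σ, R J K ∧ f = MvPolynomial.X J * MvPolynomial.X K}) :
    IsRegSeq g ↔ ∀ J K K' : σ, R J K → R J K' → K = K' := by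
  have hgj : ∀ j, ∃ J K : σ, R J K ∧ g j = MvPolynomial.X J * MvPolynomial.X K := by
    intro j
    have : g j ∈ Set.range g := ⟨j, rfl⟩
    rw [hg] at this
    exact this
  constructor
  · rintro ⟨-, hreg⟩ J K K' h1 h2
    by_contra hKK
    have m1 : (MvPolynomial.X J * MvPolynomial.X K : MvPolynomial σ k) ∈ Set.range g := by
      rw [hg]; exact ⟨J, K, h1, rfl⟩
    have m2 : (MvPolynomial.X J * MvPolynomial.X K' : MvPolynomial σ k) ∈ Set.range g := by
      rw [hg]; exact ⟨J, K', h2, rfl⟩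
    obtain ⟨a, ha⟩ := m1
    obtain ⟨b, hb⟩ := m2
    have key : ∀ (a b : Fin r) (L L' : σ), g a = MvPolynomial.X J * MvPolynomial.X L →
        g b = MvPolynomial.X J * MvPolynomial.X L' → a < b → False := by
      intro a b L L' ha hb hab
      have := hreg b b.2 (MvPolynomial.X L) (by
        have e : g ⟨b, b.2⟩ * MvPolynomial.X L = MvPolynomial.X L' * g a := by
          rw [ha]; simp only [Fin.eta]; rw [hb]; ring
        rw [e]
        exact Ideal.mul_mem_left _ _ (Ideal.subset_span ⟨a, hab, rfl⟩))
      refine X_notMem_span _ ?_ L this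
      rintro f ⟨j, -, rfl⟩
      obtain ⟨A, B, -, h⟩ := hgj j
      exact ⟨A, B, h⟩
    rcases lt_trichotomy a b with h | h | h
    · exact key a b K K' ha hb h
    · subst h
      rw [ha] at hb
      have := mul_left_cancel₀ (MvPolynomial.X_ne_zero J) hb
      exact hKK (MvPolynomial.X_injective this)
    · exact key b a K' K hb ha h
  · intro hR
    refine ⟨?_, ?_⟩
    · intro htop
      have hle : Ideal.span (Set.range g) ≤
          RingHom.ker (MvPolynomial.aeval (fun _ => 0) : MvPolynomial σ k →ₐ[k] k) := by
        rw [Ideal.span_le]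
        rintro f ⟨j, rfl⟩
        obtain ⟨A, B, -, h⟩ := hgj j
        simp [h, RingHom.mem_ker]
      rw [htop] at hle
      have := hle (Submodule.mem_top (x := (1 : MvPolynomial σ k)))
      rw [RingHom.mem_ker, map_one] at this
      exact one_ne_zero this
    · intro m hm x hx
      obtain ⟨J, K, hJK, e⟩ := hgj ⟨m, hm⟩
      let S : Set (σ →₀ ℕ) := {s | ∃ j : Fin r, (j : ℕ) < m ∧ ∃ A B, R A B ∧
        g j = MvPolynomial.X A * MvPolynomial.X B ∧
        s = Finsupp.single A 1 + Finsupp.single B 1}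
      have hS : g '' {j : Fin r | (j : ℕ) < m} =
          (fun s => MvPolynomial.monomial s (1 : k)) '' S := by
        ext f
        constructor
        · rintro ⟨j, hj, rfl⟩
          obtain ⟨A, B, hAB, h⟩ := hgj j
          exact ⟨_, ⟨j, hj, A, B, hAB, h, rfl⟩, by rw [h, X_mul_X_eq]⟩
        · rintro ⟨s, ⟨j, hj, A, B, hAB, h, rfl⟩, rfl⟩
          exact ⟨j, hj, by rw [h, X_mul_X_eq]⟩
      have hdisj : ∀ s ∈ S, s J = 0 ∧ s K = 0 := by
        rintro s ⟨j, hj, A, B, hAB, h, rfl⟩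
        have hne : g j ≠ g ⟨m, hm⟩ := fun hh => by
          have := hinj hh
          rw [this] at hj
          exact lt_irrefl _ hj
        have hAJ : A ≠ J := by
          rintro rfl
          obtain rfl := hR _ _ _ hAB hJK
          exact hne (by rw [h, e])
        have hAK : A ≠ K := by
          rintro rfl
          obtain rfl := hR _ _ _ hAB (hsymm _ _ hJK)
          exact hne (by rw [h, e, mul_comm])
        have hBJ : B ≠ J := by
          rintro rfl
          obtain rfl := hR _ _ _ (hsymm _ _ hAB) hJK
          exact hne (by rw [h, e, mul_comm])
        have hBK : B ≠ K := by
          rintro rfl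
          obtain rfl := hR _ _ _ (hsymm _ _ hAB) (hsymm _ _ hJK)
          exact hne (by rw [h, e])
        simp [Finsupp.single_apply, hAJ, hAK, hBJ, hBK]
      rw [hS] at hx ⊢
      rw [e, mul_assoc] at hx
      exact mem_span_of_X_mul S K (fun s hs => (hdisj s hs).2) _
        (mem_span_of_X_mul S J (fun s hs => (hdisj s hs).1) _ hx)

theorem NontrivInter.symm' {n : ℕ} {J K : Finset (SIdx n)} (h : NontrivInter J K) :
    NontrivInter K J := by
  refine ⟨?_, h.2.2, h.2.1⟩
  rw [Finset.inter_comm]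
  exact h.1

theorem statement_16 (n : ℕ) (hn : 1 ≤ n) (P : Set (Fin n → ℝ)) (hP : IsSignedPoset n P)
    (k : Type) [Field k] :
    (∀ (r : ℕ) (g : Fin r → MvPolynomial (ConnIdx n P) k),
        Function.Injective g →
        Set.range g = {f | ∃ J K : ConnIdx n P, NontrivInter J.val K.val ∧
          f = MvPolynomial.X J * MvPolynomial.X K} →
        (IsRegSeq g ↔ NoDoubleNontriv n P)) ∧
    (NoDoubleNontriv n P →
      ∃ (r : ℕ) (g : Fin r → MvPolynomial (ConnIdx n P) k),
        IsRegSeq g ∧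
        Ideal.span (Set.range g) =
          Ideal.span {f | ∃ J K : ConnIdx n P, NontrivInter J.val K.val ∧
            f = MvPolynomial.X J * MvPolynomial.X K}) := by
  have main : ∀ (r : ℕ) (g : Fin r → MvPolynomial (ConnIdx n P) k),
        Function.Injective g →
        Set.range g = {f | ∃ J K : ConnIdx n P, NontrivInter J.val K.val ∧
          f = MvPolynomial.X J * MvPolynomial.X K} →
        (IsRegSeq g ↔ NoDoubleNontriv n P) := by
    intro r g hinj hg
    rw [regSeq_iff (fun J K : ConnIdx n P => NontrivInter J.val K.val)
      (fun _ _ h => h.symm') r g hinj hg]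
    constructor
    · intro h J K K' hJ hK hK' h1 h2
      exact congrArg Subtype.val (h ⟨J, hJ⟩ ⟨K, hK⟩ ⟨K', hK'⟩ h1 h2)
    · intro h J K K' h1 h2
      exact Subtype.ext (h J.1 K.1 K'.1 J.2 K.2 K'.2 h1 h2)
  refine ⟨main, fun hND => ?_⟩
  have hfin : {f : MvPolynomial (ConnIdx n P) k | ∃ J K : ConnIdx n P,
      NontrivInter J.val K.val ∧ f = MvPolynomial.X J * MvPolynomial.X K}.Finite := by
    refine (Set.finite_range (fun p : ConnIdx n P × ConnIdx n P =>
      (MvPolynomial.X p.1 * MvPolynomial.X p.2 : MvPolynomial (ConnIdx n P) k))).subset ?_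
    rintro f ⟨J, K, -, rfl⟩
    exact ⟨(J, K), rfl⟩
  obtain ⟨r, g, hinj, hg⟩ : ∃ (r : ℕ) (g : Fin r → MvPolynomial (ConnIdx n P) k),
      Function.Injective g ∧ Set.range g = {f | ∃ J K : ConnIdx n P,
        NontrivInter J.val K.val ∧ f = MvPolynomial.X J * MvPolynomial.X K} := by
    refine ⟨hfin.toFinset.card, fun i => (hfin.toFinset.equivFin.symm i).1, ?_, ?_⟩
    · exact Subtype.val_injective.comp (Equiv.injective _)
    · ext f
      constructor
      · rintro ⟨i, rfl⟩
        exact hfin.mem_toFinset.mp (hfin.toFinset.equivFin.symm i).2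
      · intro hf
        exact ⟨hfin.toFinset.equivFin ⟨f, hfin.mem_toFinset.mpr hf⟩, by simp⟩
  exact ⟨r, g, (main r g hinj hg).mpr hND, by rw [hg]⟩
end
end
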